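/- Let C be a chamber of the symplectic polar space of rank n, let s ∈ [n], and let S be a totally isotropic s-space with S ∩ C_s^⊥ = {0}. Then the number of chambers B with B_s = S that are opposite to C equals q^{s(s−1)/2 + (n−s)²}. -/

import Mathlib

open scoped Classical

open Module

section Defs

variable {F V : Type} [Field F] [AddCommGroup V] [Module F V]

/-- The orthogonal complement of a subspace with respect to a bilinear form. -/
def bperp (B : V →ₗ[F] V →ₗ[F] F) (W : Submodule F V) : Submodule F V :=
  ⨅ w ∈ W, LinearMap.ker (B w)

/-- A subspace is totally isotropic for `B`. -/
def IsTotIso (B : V →ₗ[F] V →ₗ[F] F) (W : Submodule F V) : Prop :=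
  ∀ u ∈ W, ∀ w ∈ W, B u w = 0

/-- `B` is an alternating form. -/
def IsAltForm (B : V →ₗ[F] V →ₗ[F] F) : Prop := ∀ v, B v v = 0

/-- `B` is nondegenerate. -/
def NondegForm (B : V →ₗ[F] V →ₗ[F] F) : Prop := ∀ v, (∀ w, B v w = 0) → v = 0

/-- A flag of type `J` of totally isotropic subspaces: entries outside `J` are `⊥`. -/
structure SFlag (B : V →ₗ[F] V →ₗ[F] F) (J : Finset ℕ) where
  space : ℕ → Submodule F V
  isotropic : ∀ i ∈ J, IsTotIso B (space i)
  finrank_eq : ∀ i ∈ J, Module.finrank F (space i) = i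
  mono : ∀ i ∈ J, ∀ j ∈ J, i ≤ j → space i ≤ space j
  eq_bot : ∀ i, i ∉ J → space i = ⊥

/-- Two flags of type `J` are opposite. -/
def FlagOpp {B : V →ₗ[F] V →ₗ[F] F} {J : Finset ℕ} (C C' : SFlag B J) : Prop :=
  ∀ i ∈ J, bperp B (C.space i) ⊓ C'.space i = ⊥

/-- An EKR-set of flags of type `J`: no two members are opposite. -/
def IsEKRFlags {B : V →ₗ[F] V →ₗ[F] F} {J : Finset ℕ} (𝓕 : Set (SFlag B J)) : Prop :=
  ∀ C ∈ 𝓕, ∀ C' ∈ 𝓕, ¬ FlagOpp C C'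

/-- Two subspaces are opposite. -/
def SpaceOpp (B : V →ₗ[F] V →ₗ[F] F) (S T : Submodule F V) : Prop :=
  bperp B S ⊓ T = ⊥

/-- An EKR-set of totally isotropic `s`-spaces: no two members are opposite. -/
def IsEKRSpaces (B : V →ₗ[F] V →ₗ[F] F) (s : ℕ) (𝓕 : Set (Submodule F V)) : Prop :=
  (∀ S ∈ 𝓕, IsTotIso B S ∧ Module.finrank F S = s) ∧
    ∀ S ∈ 𝓕, ∀ T ∈ 𝓕, ¬ SpaceOpp B S T

/-- An `s`-space `S` is heavy with respect to a set `𝓕` of flags: every flag whose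
`s`-th entry equals `S` belongs to `𝓕`. -/
def Heavy {B : V →ₗ[F] V →ₗ[F] F} {J : Finset ℕ} (𝓕 : Set (SFlag B J)) (s : ℕ)
    (S : Submodule F V) : Prop :=
  ∀ C : SFlag B J, C.space s = S → C ∈ 𝓕

end Defs

/-- `z_k = ∏_{i=1}^k (q^i-1)/(q-1)`. -/
noncomputable def zpol (q k : ℕ) : ℝ :=
  ∏ i ∈ Finset.Icc 1 k, ((q : ℝ) ^ i - 1) / ((q : ℝ) - 1)

/-- The Gaussian binomial coefficient `[m choose k]_q` as a real number. -/
noncomputable def gaussq (q m k : ℕ) : ℝ :=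
  ∏ i ∈ Finset.Icc 1 k, ((q : ℝ) ^ (m - k + i) - 1) / ((q : ℝ) ^ i - 1)

/-- `Φ_m^s` in `PS(n,1,q)`: the number of totally isotropic `s`-spaces containing a
fixed totally isotropic `m`-space. -/
noncomputable def PhiP (q n m s : ℕ) : ℝ :=
  gaussq q (n - m) (s - m) * ∏ i ∈ Finset.Icc 1 (s - m), ((q : ℝ) ^ (n - m + 1 - i) + 1)

/-!
A flag opposite to `C` is built up one member at a time. Given a `k`-space `U` opposite to `C_k`,
let `e` span `C_{k+1}` modulo `C_k`. The extensions `W` of `U` that are opposite to `C_{k+1}` are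
the spaces `⟨v⟩ ⊔ U` for a unique `v ∈ C_k^⊥` with `B(e, v) = 1`, and the remaining constraint on
`W` reads `v ∈ Y^⊥`, where `Y = S^⊥` while `W` has to stay inside `S`, and `Y = U` from then on.
So `v` ranges over an affine hyperplane of `(Y ⊔ C_k)^⊥`, and the number of choices does not
depend on `U`: it is `q^(s-1-k)` for `k < s` and `q^(dim V - 2k - 1)` for `k ≥ s`.
-/

section Chains

variable {α : Type*} {P : ℕ → α → Prop} {r : α → α → Prop} {n : ℕ}

/-- Chains `x 0, …, x n` whose `k`-th member lies in the layer `P k` and whose consecutive members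
are related by `r`: the objects obtained by building up a flag one member at a time. -/
def IsLayeredChain (P : ℕ → α → Prop) (r : α → α → Prop) (x : Fin (n + 1) → α) : Prop :=
  (∀ i : Fin (n + 1), P i (x i)) ∧ ∀ i : Fin n, r (x i.castSucc) (x i.succ)

theorem isLayeredChain_snoc_iff {x : Fin (n + 1) → α} {y : α} :
    IsLayeredChain P r (Fin.snoc x y : Fin (n + 2) → α) ↔
      IsLayeredChain P r x ∧ r (x (Fin.last n)) y ∧ P (n + 1) y := by
  have hP : (∀ i : Fin (n + 2), P i ((Fin.snoc x y : Fin (n + 2) → α) i)) ↔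
      (∀ i : Fin (n + 1), P i (x i)) ∧ P (n + 1) y := by
    rw [Fin.forall_fin_succ']
    simp only [Fin.snoc_castSucc, Fin.snoc_last, Fin.val_castSucc, Fin.val_last]
  have hr : (∀ i : Fin (n + 1), r ((Fin.snoc x y : Fin (n + 2) → α) i.castSucc)
      ((Fin.snoc x y : Fin (n + 2) → α) i.succ)) ↔
      (∀ i : Fin n, r (x i.castSucc) (x i.succ)) ∧ r (x (Fin.last n)) y := by
    rw [Fin.forall_fin_succ']
    simp only [Fin.succ_castSucc, Fin.succ_last, Fin.snoc_castSucc, Fin.snoc_last]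
  rw [IsLayeredChain, IsLayeredChain, hP, hr]
  tauto

theorem natCard_isLayeredChain [Finite α] {N : ℕ → ℕ}
    (hN : ∀ k < n, ∀ x, P k x → Nat.card {y // r x y ∧ P (k + 1) y} = N k) :
    Nat.card {x : Fin (n + 1) → α // IsLayeredChain P r x} =
      Nat.card {x // P 0 x} * ∏ k ∈ Finset.range n, N k := by
  induction n with
  | zero =>
    simpa using Nat.card_congr
      ((Equiv.funUnique (Fin 1) α).subtypeEquiv (by simp [IsLayeredChain]))
  | succ n ih =>
    let chains := {x : Fin (n + 1) → α // IsLayeredChain P r x}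
    let splitLast : {x : Fin (n + 2) → α // IsLayeredChain P r x} ≃
        Σ x : chains, {y // r (x.1 (Fin.last n)) y ∧ P (n + 1) y} :=
      { toFun x :=
          have hx := isLayeredChain_snoc_iff.1 ((Fin.snoc_init_self x.1).symm ▸ x.2)
          ⟨⟨Fin.init x.1, hx.1⟩, x.1 (Fin.last _), hx.2⟩
        invFun x := ⟨Fin.snoc x.1.1 x.2.1, isLayeredChain_snoc_iff.2 ⟨x.1.2, x.2.2⟩⟩
        left_inv x := Subtype.ext (Fin.snoc_init_self x.1)
        right_inv x := Sigma.subtype_ext (Subtype.ext (Fin.init_snoc (α := fun _ => α) x.2.1 x.1.1))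
          (Fin.snoc_last (α := fun _ => α) x.2.1 x.1.1) }
    have : Fintype chains := Fintype.ofFinite _
    rw [Nat.card_congr splitLast, Nat.card_sigma,
      Finset.sum_congr rfl fun x _ => hN n n.lt_succ_self _ (x.2.1 (Fin.last n)),
      Finset.sum_const, Finset.card_univ, ← Nat.card_eq_fintype_card,
      ih fun k hk => hN k (hk.trans n.lt_succ_self), Finset.prod_range_succ, smul_eq_mul, mul_assoc]

end Chains

theorem sup_inf_eq_left_of_le_of_disjoint {α : Type*} [Lattice α] [OrderBot α] [IsModularLattice α]
    {a b c : α} (hac : a ≤ c) (hbc : Disjoint b c) : (a ⊔ b) ⊓ c = a := by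
  rw [sup_inf_assoc_of_le b hac, hbc.eq_bot, sup_bot_eq]

section Covering

variable {K V : Type*} [DivisionRing K] [AddCommGroup V] [Module K V] {U W : Submodule K V}

theorem span_singleton_sup_eq_of_covBy {x : V} (h : U ⋖ W) (hxW : x ∈ W) (hxU : x ∉ U) :
    K ∙ x ⊔ U = W :=
  (h.eq_or_eq le_sup_right (sup_le (by simpa using hxW) h.le)).resolve_left fun hU =>
    hxU (hU ▸ Submodule.mem_sup_left (Submodule.mem_span_singleton_self x))

theorem exists_span_singleton_sup_eq_of_covBy (h : U ⋖ W) : ∃ x ∉ U, K ∙ x ⊔ U = W := by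
  obtain ⟨x, hxW, hxU⟩ := SetLike.exists_of_lt h.lt
  exact ⟨x, hxU, span_singleton_sup_eq_of_covBy h hxW hxU⟩

theorem covBy_iff_le_and_finrank_eq [FiniteDimensional K V] :
    U ⋖ W ↔ U ≤ W ∧ finrank K W = finrank K U + 1 := by
  constructor
  · intro h
    obtain ⟨x, hxU, rfl⟩ := exists_span_singleton_sup_eq_of_covBy h
    exact ⟨h.le, by rw [sup_comm, Submodule.finrank_sup_span_singleton hxU]⟩
  · rintro ⟨hle, hrank⟩
    obtain ⟨x, hxW, hxU⟩ := SetLike.exists_of_lt (hle.lt_of_ne (by rintro rfl; omega))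
    have hsup : K ∙ x ⊔ U = W :=
      Submodule.eq_of_le_of_finrank_eq (sup_le (by simpa using hxW) hle)
        (by rw [sup_comm, Submodule.finrank_sup_span_singleton hxU, hrank])
    exact hsup ▸ Submodule.covBy_span_singleton_sup hxU

end Covering

section Extensions

variable {K V : Type*} [Field K] [AddCommGroup V] [Module K V] {U W L : Submodule K V}
  {φ : Dual K V}

theorem exists_mem_inf_apply_eq_one (hUL : IsCompl U L) (hUW : U < W)
    (hW : Disjoint W (L ⊓ LinearMap.ker φ)) : ∃ v ∈ W ⊓ L, φ v = 1 := by
  have hWL : W ⊓ L ≠ ⊥ := fun h => hUW.ne <| by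
    rw [← sup_bot_eq U, ← h, inf_comm, ← sup_inf_assoc_of_le L hUW.le, hUL.sup_eq_top, top_inf_eq]
  obtain ⟨x, hx, hx0⟩ := Submodule.exists_mem_ne_zero_of_ne_bot hWL
  have hφx : φ x ≠ 0 := fun h => hx0 (Submodule.disjoint_def.1 hW x hx.1 ⟨hx.2, h⟩)
  exact ⟨(φ x)⁻¹ • x, Submodule.smul_mem _ _ hx, by simp [hφx]⟩

theorem disjoint_span_singleton_sup_inf_ker {v : V} (hUL : Disjoint U L) (hv : v ∈ L)
    (hφv : φ v ≠ 0) : Disjoint (K ∙ v ⊔ U) (L ⊓ LinearMap.ker φ) := by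
  rw [disjoint_iff, ← inf_assoc, sup_inf_eq_left_of_le_of_disjoint (by simpa using hv) hUL,
    inf_comm, ← disjoint_iff]
  exact Submodule.disjoint_span_singleton_of_notMem hφv

-- `W` meets `L` in a line on which `φ` does not vanish, and `v` is its normalized vector.
theorem natCard_covBy_disjoint_inf_ker {T : Submodule K V} (hUL : IsCompl U L) (hUT : U ≤ T)
    (φ : Dual K V) :
    Nat.card {W // U ⋖ W ∧ W ≤ T ∧ Disjoint W (L ⊓ LinearMap.ker φ)} =
      Nat.card {v // v ∈ T ⊓ L ∧ φ v = 1} := by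
  have hnotMem {v : V} (hv : v ∈ L) (hφv : φ v = 1) : v ∉ U := fun hvU => by
    simp [Submodule.disjoint_def.1 hUL.disjoint v hvU hv] at hφv
  let extend (v : {v // v ∈ T ⊓ L ∧ φ v = 1}) :
      {W // U ⋖ W ∧ W ≤ T ∧ Disjoint W (L ⊓ LinearMap.ker φ)} :=
    ⟨K ∙ v.1 ⊔ U, Submodule.covBy_span_singleton_sup (hnotMem v.2.1.2 v.2.2),
      sup_le (by simpa using v.2.1.1) hUT,
      disjoint_span_singleton_sup_inf_ker hUL.disjoint v.2.1.2 (by simp [v.2.2])⟩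
  refine (Nat.card_eq_of_bijective extend ⟨?_, ?_⟩).symm
  · rintro ⟨v, hv, hφv⟩ ⟨w, hw, hφw⟩ h
    have hsup : K ∙ v ⊔ U = K ∙ w ⊔ U := congrArg Subtype.val h
    have hspan : K ∙ v = K ∙ w := by
      rw [← sup_inf_eq_left_of_le_of_disjoint (a := K ∙ v) (by simpa using hv.2) hUL.disjoint, hsup,
        sup_inf_eq_left_of_le_of_disjoint (by simpa using hw.2) hUL.disjoint]
    obtain ⟨c, rfl⟩ := Submodule.mem_span_singleton.1 (hspan ▸ Submodule.mem_span_singleton_self v)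
    have hc : c = 1 := by simpa [hφw] using hφv
    simp [hc]
  · rintro ⟨W, hUW, hWT, hW⟩
    obtain ⟨v, hv, hφv⟩ := exists_mem_inf_apply_eq_one hUL hUW.lt hW
    exact ⟨⟨v, ⟨hWT hv.1, hv.2⟩, hφv⟩,
      Subtype.ext (span_singleton_sup_eq_of_covBy hUW hv.1 (hnotMem hv.2 hφv))⟩

theorem natCard_dual_apply_eq [FiniteDimensional K V] (hφ : φ ≠ 0) (c : K) :
    Nat.card {v // φ v = c} = Nat.card K ^ (finrank K V - 1) := by
  have hker : finrank K (LinearMap.ker φ) = finrank K V - 1 :=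
    Nat.eq_sub_of_add_eq (Dual.finrank_ker_add_one_of_ne_zero hφ)
  rw [← hker, ← natCard_eq_pow_finrank]
  exact Nat.card_congr
    (AddMonoidHom.fiberEquivKerOfSurjective (f := φ.toAddMonoidHom) (LinearMap.surjective hφ) c)

end Extensions

section Orthogonal

open LinearMap (BilinForm)

variable {K V : Type*} [Field K] [AddCommGroup V] [Module K V] {B : BilinForm K V}
  {U W A : Submodule K V}

theorem orthogonal_sup (U W : Submodule K V) :
    B.orthogonal (U ⊔ W) = B.orthogonal U ⊓ B.orthogonal W := by
  refine le_antisymm (le_inf (BilinForm.orthogonal_le le_sup_left)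
    (BilinForm.orthogonal_le le_sup_right)) ?_
  rintro v ⟨hU, hW⟩ _ h
  obtain ⟨u, hu, w, hw, rfl⟩ := Submodule.mem_sup.1 h
  have huv : B u v = 0 := hU u hu
  have hwv : B w v = 0 := hW w hw
  simp [huv, hwv]

theorem le_orthogonal_comm (hrefl : B.IsRefl) : U ≤ B.orthogonal W ↔ W ≤ B.orthogonal U :=
  ⟨fun h _ hw _ hu => hrefl _ _ (h hu _ hw), fun h _ hu _ hw => hrefl _ _ (h hw _ hu)⟩

theorem le_orthogonal_self_of_covBy (hB : B.IsAlt) (hUW : U ⋖ W)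
    (hU : U ≤ B.orthogonal U) (hW : W ≤ B.orthogonal U) : W ≤ B.orthogonal W := by
  obtain ⟨x, -, rfl⟩ := exists_span_singleton_sup_eq_of_covBy hUW
  have hxU : K ∙ x ≤ B.orthogonal U := le_sup_left.trans hW
  have hxx : K ∙ x ≤ B.orthogonal (K ∙ x) := by
    rw [BilinForm.orthogonal_span_singleton_eq_toLin_ker, Submodule.span_singleton_le_iff_mem]
    exact hB x
  rw [orthogonal_sup]
  exact sup_le (le_inf hxx hxU) (le_inf ((le_orthogonal_comm hB.isRefl).1 hxU) hU)

variable [FiniteDimensional K V]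

theorem isCompl_orthogonal_of_disjoint (hB : B.Nondegenerate)
    (h : finrank K U = finrank K A) (hd : Disjoint U (B.orthogonal A)) :
    IsCompl U (B.orthogonal A) := by
  refine (Submodule.isCompl_iff_disjoint _ _ ?_).2 hd
  rw [BilinForm.finrank_orthogonal hB, h]
  omega

theorem disjoint_orthogonal_symm (hB : B.Nondegenerate) (hrefl : B.IsRefl)
    (h : finrank K U = finrank K A) (hd : Disjoint U (B.orthogonal A)) :
    Disjoint A (B.orthogonal U) := by
  rw [disjoint_iff]
  calc A ⊓ B.orthogonal U = B.orthogonal (B.orthogonal A ⊔ U) := by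
        rw [orthogonal_sup, BilinForm.orthogonal_orthogonal hB hrefl]
    _ = ⊥ := by
        rw [sup_comm, (isCompl_orthogonal_of_disjoint hB h hd).sup_eq_top,
          BilinForm.orthogonal_top_eq_bot hB]

theorem natCard_mem_orthogonal_apply_eq_one (hB : B.Nondegenerate) (hrefl : B.IsRefl)
    {e : V} (he : e ∉ A) :
    Nat.card {v // v ∈ B.orthogonal A ∧ B e v = 1} =
      Nat.card K ^ (finrank K V - finrank K A - 1) := by
  have hf : (B e).domRestrict (B.orthogonal A) ≠ 0 := by
    intro h
    refine he (BilinForm.orthogonal_orthogonal hB hrefl A ▸ fun v hv => ?_)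
    exact hrefl _ _ (LinearMap.congr_fun h ⟨v, hv⟩)
  rw [← BilinForm.finrank_orthogonal hB, ← natCard_dual_apply_eq hf 1]
  exact Nat.card_congr (Equiv.subtypeSubtypeEquivSubtypeInter _ _).symm

theorem natCard_covBy_disjoint_orthogonal (hB : B.Nondegenerate) (hrefl : B.IsRefl)
    {A' Y : Submodule K V} (hrank : finrank K U = finrank K A)
    (hUA : Disjoint U (B.orthogonal A)) (hAA' : A ⋖ A') (hYA' : Disjoint Y A')
    (hUY : U ≤ B.orthogonal Y) :
    Nat.card {W // U ⋖ W ∧ W ≤ B.orthogonal Y ∧ Disjoint W (B.orthogonal A')} =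
      Nat.card K ^ (finrank K V - (finrank K Y + finrank K A) - 1) := by
  obtain ⟨e, heA, rfl⟩ := exists_span_singleton_sup_eq_of_covBy hAA'
  have heYA : e ∉ Y ⊔ A := fun he => heA <| by
    rw [← sup_inf_eq_left_of_le_of_disjoint hAA'.le hYA', sup_comm]
    exact ⟨he, Submodule.mem_sup_left (Submodule.mem_span_singleton_self e)⟩
  have hperp : B.orthogonal (K ∙ e ⊔ A) = B.orthogonal A ⊓ LinearMap.ker (B e) := by
    rw [orthogonal_sup, inf_comm, BilinForm.orthogonal_span_singleton_eq_toLin_ker]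
    rfl
  have hsum : finrank K (Y ⊔ A : Submodule K V) = finrank K Y + finrank K A := by
    rw [← Submodule.finrank_sup_add_finrank_inf_eq, (hYA'.mono_right le_sup_right).eq_bot,
      finrank_bot, add_zero]
  rw [hperp, natCard_covBy_disjoint_inf_ker (isCompl_orthogonal_of_disjoint hB hrank hUA) hUY,
    ← orthogonal_sup, natCard_mem_orthogonal_apply_eq_one hB hrefl heYA, hsum]

end Orthogonal

theorem bperp_eq_orthogonal {F V : Type} [Field F] [AddCommGroup V] [Module F V]
    (B : V →ₗ[F] V →ₗ[F] F) (W : Submodule F V) :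
    bperp B W = LinearMap.BilinForm.orthogonal B W := by
  ext v
  simp [bperp]

theorem isTotIso_iff_le_orthogonal {F V : Type} [Field F] [AddCommGroup V] [Module F V]
    {B : V →ₗ[F] V →ₗ[F] F} {W : Submodule F V} :
    IsTotIso B W ↔ W ≤ LinearMap.BilinForm.orthogonal B W :=
  ⟨fun h v hv w hw => h w hw v hv, fun h v hv _ hw => h hw v hv⟩

namespace SFlag

open LinearMap (BilinForm)

variable {F V : Type} [Field F] [AddCommGroup V] [Module F V] {B : BilinForm F V} {n i j k : ℕ}
  (C : SFlag B (Finset.Icc 1 n))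

theorem space_zero : C.space 0 = ⊥ :=
  C.eq_bot 0 (by simp)

theorem finrank_space (hk : k ≤ n) : finrank F (C.space k) = k := by
  rcases k.eq_zero_or_pos with rfl | hpos
  · rw [C.space_zero, finrank_bot]
  · exact C.finrank_eq k (Finset.mem_Icc.2 ⟨hpos, hk⟩)

theorem space_le_space (hij : i ≤ j) (hj : j ≤ n) : C.space i ≤ C.space j := by
  rcases i.eq_zero_or_pos with rfl | hpos
  · exact C.space_zero.trans_le bot_le
  · exact C.mono i (Finset.mem_Icc.2 ⟨hpos, hij.trans hj⟩) j
      (Finset.mem_Icc.2 ⟨hpos.trans_le hij, hj⟩) hij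

theorem space_le_orthogonal (hi : i ≤ n) (hj : j ≤ n) : C.space i ≤ B.orthogonal (C.space j) := by
  have htop : C.space n ≤ B.orthogonal (C.space n) := by
    rcases n.eq_zero_or_pos with rfl | hpos
    · exact C.space_zero.trans_le bot_le
    · exact isTotIso_iff_le_orthogonal.1 (C.isotropic n (Finset.mem_Icc.2 ⟨hpos, le_rfl⟩))
  exact (C.space_le_space hi le_rfl).trans
    (htop.trans (BilinForm.orthogonal_le (C.space_le_space hj le_rfl)))

theorem space_covBy_space_succ [FiniteDimensional F V] (hk : k < n) :
    C.space k ⋖ C.space (k + 1) :=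
  covBy_iff_le_and_finrank_eq.2 ⟨C.space_le_space k.le_succ hk,
    by rw [C.finrank_space hk, C.finrank_space hk.le]⟩

theorem two_mul_le_finrank [FiniteDimensional F V] (C : SFlag B (Finset.Icc 1 n))
    (hB : B.Nondegenerate) :
    2 * n ≤ finrank F V := by
  have hle := Submodule.finrank_mono (C.space_le_orthogonal le_rfl le_rfl)
  have hn := (C.space n).finrank_le
  rw [BilinForm.finrank_orthogonal hB, C.finrank_space le_rfl] at hle
  rw [C.finrank_space le_rfl] at hn
  omega

variable {C} in
theorem ext_of_forall_le {D : SFlag B (Finset.Icc 1 n)} (h : ∀ k ≤ n, C.space k = D.space k) :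
    C = D := by
  have hspace : C.space = D.space := funext fun k => by
    by_cases hk : k ≤ n
    · exact h k hk
    · rw [C.eq_bot k (by simp [hk]), D.eq_bot k (by simp [hk])]
  cases C; cases D; congr

/-- The flag whose `i`-th member is `x i`, for a chain `0 = x 0 ≤ ⋯ ≤ x n` of totally isotropic
subspaces of dimensions `0, …, n`. -/
def ofChain (x : Fin (n + 1) → Submodule F V) (hmono : Monotone x)
    (hiso : ∀ i, x i ≤ B.orthogonal (x i)) (hrank : ∀ i : Fin (n + 1), finrank F (x i) = i) :
    SFlag B (Finset.Icc 1 n) where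
  space k := if hk : k ∈ Finset.Icc 1 n then x ⟨k, Nat.lt_succ_of_le (Finset.mem_Icc.1 hk).2⟩ else ⊥
  isotropic k hk := by
    rw [dif_pos hk]
    exact isTotIso_iff_le_orthogonal.2 (hiso _)
  finrank_eq k hk := by rw [dif_pos hk, hrank]
  mono i hi j hj hij := by
    rw [dif_pos hi, dif_pos hj]
    exact hmono hij
  eq_bot k hk := dif_neg hk

theorem ofChain_space [FiniteDimensional F V] {x : Fin (n + 1) → Submodule F V}
    (hmono : Monotone x) (hiso : ∀ i, x i ≤ B.orthogonal (x i))
    (hrank : ∀ i : Fin (n + 1), finrank F (x i) = i) (i : Fin (n + 1)) :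
    (ofChain x hmono hiso hrank).space i = x i := by
  rcases Fin.eq_zero_or_eq_succ i with rfl | ⟨j, rfl⟩
  · rw [Fin.val_zero, space_zero]
    exact (Submodule.finrank_eq_zero.1 (hrank 0)).symm
  · exact dif_pos (Finset.mem_Icc.2 ⟨Nat.succ_pos j, j.is_lt⟩)

end SFlag

section OppositeMembers

open LinearMap (BilinForm)

variable {F V : Type} [Field F] [AddCommGroup V] [Module F V] {B : BilinForm F V} {n s k : ℕ}
  {C D : SFlag B (Finset.Icc 1 n)} {S U W : Submodule F V}

/-- `U` satisfies every condition that being the `k`-th member of a flag opposite to `C` with `s`-th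
member `S` puts on a single subspace. Only `U ≤ S` for `k ≤ s` is recorded about `S`: dimensions
turn it into equality at `k = s`, and for `k > s` the inclusion `S ≤ U` is inherited from below. -/
structure IsOppositeMember (C : SFlag B (Finset.Icc 1 n)) (S : Submodule F V) (s k : ℕ)
    (U : Submodule F V) : Prop where
  le_orthogonal : U ≤ B.orthogonal U
  finrank_eq : finrank F U = k
  disjoint : Disjoint U (B.orthogonal (C.space k))
  le_of_le : k ≤ s → U ≤ S

variable [FiniteDimensional F V]

theorem isOppositeMember_zero_iff : IsOppositeMember C S s 0 U ↔ U = ⊥ :=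
  ⟨fun h => Submodule.finrank_eq_zero.1 h.finrank_eq,
    fun h => h ▸ ⟨bot_le, finrank_bot F V, disjoint_bot_left, fun _ => bot_le⟩⟩

theorem flagOpp_iff_forall_disjoint_orthogonal (hB : B.Nondegenerate) (hrefl : B.IsRefl) :
    FlagOpp D C ↔ ∀ k ≤ n, Disjoint (D.space k) (B.orthogonal (C.space k)) := by
  have hcomm (k : ℕ) (hk : k ≤ n) : bperp B (D.space k) ⊓ C.space k = ⊥ ↔
      Disjoint (D.space k) (B.orthogonal (C.space k)) := by
    have hrank : finrank F (C.space k) = finrank F (D.space k) := by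
      rw [C.finrank_space hk, D.finrank_space hk]
    rw [bperp_eq_orthogonal, ← disjoint_iff, disjoint_comm]
    exact ⟨disjoint_orthogonal_symm hB hrefl hrank, disjoint_orthogonal_symm hB hrefl hrank.symm⟩
  refine ⟨fun h k hk => ?_, fun h k hk =>
    have hkn := (Finset.mem_Icc.1 hk).2
    (hcomm k hkn).2 (h k hkn)⟩
  rcases k.eq_zero_or_pos with rfl | hpos
  · exact D.space_zero ▸ disjoint_bot_left
  · exact (hcomm k hk).1 (h k (Finset.mem_Icc.2 ⟨hpos, hk⟩))

theorem space_eq_and_flagOpp_iff (hB : B.Nondegenerate) (hrefl : B.IsRefl) (hs : s ≤ n)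
    (hS : finrank F S = s) :
    D.space s = S ∧ FlagOpp D C ↔ ∀ k ≤ n, IsOppositeMember C S s k (D.space k) := by
  constructor
  · rintro ⟨rfl, hopp⟩ k hk
    exact ⟨D.space_le_orthogonal hk hk, D.finrank_space hk,
      (flagOpp_iff_forall_disjoint_orthogonal hB hrefl).1 hopp k hk,
      fun hks => D.space_le_space hks hs⟩
  · intro h
    exact ⟨Submodule.eq_of_le_of_finrank_eq ((h s hs).le_of_le le_rfl)
      ((D.finrank_space hs).trans hS.symm),
      (flagOpp_iff_forall_disjoint_orthogonal hB hrefl).2 fun k hk => (h k hk).disjoint⟩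

theorem natCard_space_eq_and_flagOpp (hB : B.Nondegenerate) (hrefl : B.IsRefl) (hs : s ≤ n)
    (hS : finrank F S = s) :
    Nat.card {D : SFlag B (Finset.Icc 1 n) // D.space s = S ∧ FlagOpp D C} =
      Nat.card {x : Fin (n + 1) → Submodule F V //
        IsLayeredChain (IsOppositeMember C S s) (· ≤ ·) x} := by
  have hiff (D : SFlag B (Finset.Icc 1 n)) :=
    space_eq_and_flagOpp_iff (C := C) (D := D) hB hrefl hs hS
  let members (D : {D : SFlag B (Finset.Icc 1 n) // D.space s = S ∧ FlagOpp D C}) :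
      {x : Fin (n + 1) → Submodule F V // IsLayeredChain (IsOppositeMember C S s) (· ≤ ·) x} :=
    ⟨fun i => D.1.space i, fun i => (hiff D.1).1 D.2 i i.is_le,
      fun i => D.1.space_le_space (by simp) i.succ.is_le⟩
  refine Nat.card_eq_of_bijective members ⟨?_, ?_⟩
  · intro D D' h
    refine Subtype.ext (SFlag.ext_of_forall_le fun k hk => ?_)
    exact congrFun (congrArg Subtype.val h) ⟨k, Nat.lt_succ_of_le hk⟩
  · rintro ⟨x, hopp, hle⟩
    let D := SFlag.ofChain x (Fin.monotone_iff_le_succ.2 hle) (fun i => (hopp i).le_orthogonal)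
      fun i => (hopp i).finrank_eq
    have hD (i : Fin (n + 1)) : D.space i = x i := SFlag.ofChain_space _ _ _ i
    have hDopp : ∀ k ≤ n, IsOppositeMember C S s k (D.space k) := fun k hk =>
      hD ⟨k, Nat.lt_succ_of_le hk⟩ ▸ hopp ⟨k, Nat.lt_succ_of_le hk⟩
    exact ⟨⟨D, (hiff D).2 hDopp⟩, Subtype.ext (funext hD)⟩

namespace IsOppositeMember

theorem covBy (hU : IsOppositeMember C S s k U) (hW : IsOppositeMember C S s (k + 1) W)
    (h : U ≤ W) : U ⋖ W :=
  covBy_iff_le_and_finrank_eq.2 ⟨h, by rw [hW.finrank_eq, hU.finrank_eq]⟩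

theorem natCard_succ_of_lt (hB : B.Nondegenerate) (hrefl : B.IsRefl)
    (hU : IsOppositeMember C S s k U) (hs : s ≤ n) (hSiso : S ≤ B.orthogonal S)
    (hSrank : finrank F S = s) (hSC : Disjoint S (B.orthogonal (C.space s))) (hk : k < s) :
    Nat.card {W // U ≤ W ∧ IsOppositeMember C S s (k + 1) W} = Nat.card F ^ (s - 1 - k) := by
  have hbiorth : B.orthogonal (B.orthogonal S) = S := BilinForm.orthogonal_orthogonal hB hrefl S
  have hstep (W : Submodule F V) : U ≤ W ∧ IsOppositeMember C S s (k + 1) W ↔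
      U ⋖ W ∧ W ≤ B.orthogonal (B.orthogonal S) ∧
        Disjoint W (B.orthogonal (C.space (k + 1))) := by
    rw [hbiorth]
    refine ⟨fun ⟨hUW, hW⟩ => ⟨hU.covBy hW hUW, hW.le_of_le hk, hW.disjoint⟩, ?_⟩
    rintro ⟨hUW, hWS, hWC⟩
    exact ⟨hUW.le, hWS.trans (hSiso.trans (BilinForm.orthogonal_le hWS)),
      by rw [(covBy_iff_le_and_finrank_eq.1 hUW).2, hU.finrank_eq], hWC, fun _ => hWS⟩
  have hCS : Disjoint (B.orthogonal S) (C.space (k + 1)) :=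
    ((disjoint_orthogonal_symm hB hrefl (hSrank.trans (C.finrank_space hs).symm) hSC).mono_left
      (C.space_le_space hk hs)).symm
  have hkn : k < n := hk.trans_le hs
  have hrank : finrank F U = finrank F (C.space k) := by rw [hU.finrank_eq, C.finrank_space hkn.le]
  have hsV : s ≤ finrank F V := hSrank ▸ S.finrank_le
  rw [Nat.card_congr (Equiv.subtypeEquivRight hstep), natCard_covBy_disjoint_orthogonal hB hrefl
    hrank hU.disjoint (C.space_covBy_space_succ hkn) hCS (hbiorth.symm ▸ hU.le_of_le hk.le),
    BilinForm.finrank_orthogonal hB, hSrank, C.finrank_space hkn.le]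
  congr 1
  omega

theorem natCard_succ_of_ge (hB : B.Nondegenerate) (halt : B.IsAlt)
    (hU : IsOppositeMember C S s k U) (hsk : s ≤ k) (hk : k < n) :
    Nat.card {W // U ≤ W ∧ IsOppositeMember C S s (k + 1) W} =
      Nat.card F ^ (finrank F V - 2 * k - 1) := by
  have hstep (W : Submodule F V) : U ≤ W ∧ IsOppositeMember C S s (k + 1) W ↔
      U ⋖ W ∧ W ≤ B.orthogonal U ∧ Disjoint W (B.orthogonal (C.space (k + 1))) := by
    refine ⟨fun ⟨hUW, hW⟩ => ⟨hU.covBy hW hUW,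
      hW.le_orthogonal.trans (BilinForm.orthogonal_le hUW), hW.disjoint⟩, ?_⟩
    rintro ⟨hUW, hWU, hWC⟩
    exact ⟨hUW.le, le_orthogonal_self_of_covBy halt hUW hU.le_orthogonal hWU,
      by rw [(covBy_iff_le_and_finrank_eq.1 hUW).2, hU.finrank_eq], hWC, fun h => by omega⟩
  have hUC : Disjoint U (C.space (k + 1)) :=
    hU.disjoint.mono_right (C.space_le_orthogonal hk hk.le)
  have hrank : finrank F U = finrank F (C.space k) := by rw [hU.finrank_eq, C.finrank_space hk.le]
  rw [Nat.card_congr (Equiv.subtypeEquivRight hstep), natCard_covBy_disjoint_orthogonal hB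
    halt.isRefl hrank hU.disjoint (C.space_covBy_space_succ hk) hUC hU.le_orthogonal,
    C.finrank_space hk.le, hU.finrank_eq, two_mul]

end IsOppositeMember

end OppositeMembers

theorem sum_range_sub_two_mul_sub_one {m t : ℕ} (h : 2 * t ≤ m) :
    ∑ k ∈ Finset.range t, (m - 2 * k - 1) = t * (m - t) := by
  induction t with
  | zero => simp
  | succ t ih =>
    rw [Finset.sum_range_succ, ih (by omega)]
    obtain ⟨c, rfl⟩ := Nat.exists_eq_add_of_le h
    have h₁ : 2 * (t + 1) + c - 2 * t - 1 = c + 1 := by omega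
    have h₂ : 2 * (t + 1) + c - t = t + 2 + c := by omega
    have h₃ : 2 * (t + 1) + c - (t + 1) = t + 1 + c := by omega
    rw [h₁, h₂, h₃]
    ring

theorem prod_range_ite_lt_pow {q s n d : ℕ} (hs : s ≤ n) (hd : 2 * n ≤ d) :
    ∏ k ∈ Finset.range n, (if k < s then q ^ (s - 1 - k) else q ^ (d - 2 * k - 1)) =
      q ^ (s * (s - 1) / 2 + (n - s) * (d - n - s)) := by
  obtain ⟨t, rfl⟩ := Nat.exists_eq_add_of_le hs
  have hbelow : ∏ k ∈ Finset.range s, (if k < s then q ^ (s - 1 - k) else q ^ (d - 2 * k - 1)) =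
      q ^ (s * (s - 1) / 2) := by
    rw [Finset.prod_congr rfl fun k hk => if_pos (Finset.mem_range.1 hk),
      Finset.prod_pow_eq_pow_sum, Finset.sum_range_reflect (fun k => k), Finset.sum_range_id]
  have habove : ∏ k ∈ Finset.range t,
      (if s + k < s then q ^ (s - 1 - (s + k)) else q ^ (d - 2 * (s + k) - 1)) =
      q ^ (t * (d - 2 * s - t)) := by
    rw [← sum_range_sub_two_mul_sub_one (by omega), ← Finset.prod_pow_eq_pow_sum]
    refine Finset.prod_congr rfl fun k _ => ?_
    rw [if_neg (by omega), mul_add, Nat.sub_add_eq]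
  rw [Finset.prod_range_add, hbelow, habove, ← pow_add]
  congr 3 <;> omega

theorem stmt_16_general {F V : Type} [Field F] [Finite F] [AddCommGroup V] [Module F V]
    [FiniteDimensional F V] {n s : ℕ} {B : V →ₗ[F] V →ₗ[F] F} (halt : IsAltForm B)
    (hnd : NondegForm B) (C : SFlag B (Finset.Icc 1 n)) (hs : s ≤ n) {S : Submodule F V}
    (hSiso : IsTotIso B S) (hSrank : finrank F S = s) (hskew : S ⊓ bperp B (C.space s) = ⊥) :
    Nat.card {D : SFlag B (Finset.Icc 1 n) // D.space s = S ∧ FlagOpp D C} =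
      Nat.card F ^ (s * (s - 1) / 2 + (n - s) * (finrank F V - n - s)) := by
  have hrefl : B.IsRefl := LinearMap.IsAlt.isRefl halt
  have hB : B.Nondegenerate := hrefl.nondegenerate_iff_separatingLeft.2 hnd
  have hSC : Disjoint S (LinearMap.BilinForm.orthogonal B (C.space s)) := by
    rwa [disjoint_iff, ← bperp_eq_orthogonal]
  have hextensions : ∀ k < n, ∀ U, IsOppositeMember C S s k U →
      Nat.card {W // U ≤ W ∧ IsOppositeMember C S s (k + 1) W} =
        if k < s then Nat.card F ^ (s - 1 - k) else Nat.card F ^ (finrank F V - 2 * k - 1) := by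
    intro k hk U hU
    split_ifs with hks
    · exact hU.natCard_succ_of_lt hB hrefl hs (isTotIso_iff_le_orthogonal.1 hSiso) hSrank hSC hks
    · exact hU.natCard_succ_of_ge hB halt (not_lt.1 hks) hk
  have : Finite V := Module.finite_of_finite F
  rw [natCard_space_eq_and_flagOpp hB hrefl hs hSrank, natCard_isLayeredChain hextensions,
    prod_range_ite_lt_pow hs (C.two_mul_le_finrank hB)]
  simp [isOppositeMember_zero_iff]

/-- if `S` is a totally isotropic `s`-space with `S ∩ C_s^⊥ = 0` for a
chamber `C`, then exactly `q^{s(s-1)/2+(n-s)²}` chambers contain `S` and are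
opposite to `C`. -/
theorem stmt_16 {F V : Type} [Field F] [Fintype F] [AddCommGroup V] [Module F V]
    [FiniteDimensional F V] (n q : ℕ) (hn : 3 ≤ n) (hq : Fintype.card F = q)
    (B : V →ₗ[F] V →ₗ[F] F) (halt : IsAltForm B) (hnd : NondegForm B)
    (hdim : Module.finrank F V = 2 * n)
    (C : SFlag B (Finset.Icc 1 n)) (s : ℕ) (hs : s ∈ Finset.Icc 1 n)
    (S : Submodule F V) (hSiso : IsTotIso B S) (hSrank : Module.finrank F S = s)
    (hskew : S ⊓ bperp B (SFlag.space C s) = ⊥) :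
    Nat.card {Ch : SFlag B (Finset.Icc 1 n) // SFlag.space Ch s = S ∧ FlagOpp Ch C} =
      q ^ (s * (s - 1) / 2 + (n - s) ^ 2) := by
  have hexp : 2 * n - n - s = n - s := by omega
  rw [stmt_16_general halt hnd C (Finset.mem_Icc.1 hs).2 hSiso hSrank hskew, hdim, hexp, ← sq,
    Nat.card_eq_fintype_card, hq]
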